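/- arXiv:1708.00349 — 2 statements merged into one kernel-verified Lean document; each statement's English description precedes it below -/
import Mathlib

section
/- Let q be a prime power, n ≥ 3 an integer, and b ∈ 𝔽_{q^n} with b^{(q^n−1)/(q−1)} = 1. Then there exists a ∈ 𝔽_{q^n} such that the polynomial X^{q^2} + a·X^q + b·X has exactly q² roots in 𝔽_{q^n}. In particular, the norm condition b^{(q^n−1)/(q−1)} ≠ 1 is necessary for the polynomial b·X + a·X^q + X^{q^2} to have at most q roots in 𝔽_{q^n} for every a ∈ 𝔽_{q^n}. -/
/-!
Write `b = c ^ (q - 1)`, which is possible because `Fˣ` is cyclic and `b` has norm one over the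
subfield `K` with `q` elements. The monic `q`-polynomial of `q`-degree 2 vanishing at `u` and `v`,
linearly independent over `K`, has linear coefficient `D ^ (q - 1)`, where `D = u v^q - u^q v`.
So it is enough to solve `u v^q - u^q v = c`. With `v = u t` this reads
`t^q - t = c / u^(q+1)`. The `K`-linear map `t ↦ t^q - t` has kernel of dimension one, so its image
is the kernel of a linear functional `f`, and it remains to find `w = u⁻¹ ≠ 0` with
`f (c w^(q+1)) = 0`. The left side is a quadratic form in `n ≥ 3` variables over `K`, which has a
nontrivial zero by the Chevalley–Warning theorem.
-/

/-- By Chevalley–Warning, the quadratic form of a bilinear form in at least three variables over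
a finite field is isotropic. -/
theorem exists_isotropic {K V : Type*} [Field K] [Fintype K] [AddCommGroup V] [Module K V]
    [FiniteDimensional K V] (hn : 3 ≤ Module.finrank K V) (B : V →ₗ[K] V →ₗ[K] K) :
    ∃ w : V, w ≠ 0 ∧ B w w = 0 := by
  classical
  obtain ⟨p, _, _, hp, -⟩ := FiniteField.card' K
  let e := Module.finBasis K V
  let P : MvPolynomial (Fin (Module.finrank K V)) K :=
    ∑ i, ∑ j, MvPolynomial.C (B (e i) (e j)) * (MvPolynomial.X i * MvPolynomial.X j)
  have hdeg : P.totalDegree ≤ 2 := by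
    refine MvPolynomial.totalDegree_finsetSum_le fun i _ => ?_
    refine MvPolynomial.totalDegree_finsetSum_le fun j _ => ?_
    refine (MvPolynomial.totalDegree_mul _ _).trans ?_
    rw [MvPolynomial.totalDegree_C, zero_add]
    refine (MvPolynomial.totalDegree_mul _ _).trans ?_
    simp
  have heval : ∀ x, MvPolynomial.eval x P = B (∑ i, x i • e i) (∑ j, x j • e j) := by
    intro x
    simp only [P, map_sum, LinearMap.sum_apply, map_smul, LinearMap.smul_apply, smul_eq_mul,
      map_mul, MvPolynomial.eval_C, MvPolynomial.eval_X]
    rw [Finset.sum_comm]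
    refine Finset.sum_congr rfl fun i _ => ?_
    rw [Finset.mul_sum]
    exact Finset.sum_congr rfl fun j _ => by ring
  have hdvd := char_dvd_card_solutions (K := K) p (f := P) (by rw [Fintype.card_fin]; omega)
  let z : {x : Fin (Module.finrank K V) → K // MvPolynomial.eval x P = 0} :=
    ⟨0, by rw [heval]; simp⟩
  have hcard : 1 < Fintype.card {x : Fin (Module.finrank K V) → K // MvPolynomial.eval x P = 0} :=
    hp.one_lt.trans_le (Nat.le_of_dvd (Fintype.card_pos_iff.2 ⟨z⟩) hdvd)
  obtain ⟨x, hx⟩ := Fintype.exists_ne_of_one_lt_card hcard z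
  refine ⟨∑ i, x.1 i • e i, fun h => hx (Subtype.ext (funext fun i => ?_)), ?_⟩
  · exact Fintype.linearIndependent_iff.1 e.linearIndependent x.1 h i
  · rw [← heval]; exact x.2

open Polynomial in
theorem card_zeros_le {F : Type*} [Field F] [Finite F] (P : F[X]) (h : P ≠ 0) (S : Set F)
    (hS : ∀ x ∈ S, P.eval x = 0) : Nat.card S ≤ P.natDegree := by
  classical
  have := Fintype.ofFinite F
  rw [Nat.card_eq_fintype_card, ← Set.toFinset_card]
  exact Polynomial.card_le_degree_of_subset_roots fun x hx => by
    rw [Polynomial.mem_roots h]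
    exact hS x (by simpa using hx)

/-- Every nonzero `c` has the form `u v^q - u^q v` when `[F : K] ≥ 3`. -/
theorem exists_moore {K F : Type*} [Field K] [Fintype K] [Field F] [Finite F] [Algebra K F]
    (hn : 3 ≤ Module.finrank K F) (c : F) :
    ∃ u t : F, u ≠ 0 ∧ u * (u * t) ^ Fintype.card K - u ^ Fintype.card K * (u * t) = c := by
  have : FiniteDimensional K F := Module.finite_of_finrank_pos (by omega)
  set q := Fintype.card K with hq
  have hq1 : 1 < q := Fintype.one_lt_card
  let φ : F →ₗ[K] F := (FiniteField.frobeniusAlgHom K F).toLinearMap - LinearMap.id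
  have hφ : ∀ x, φ x = x ^ q - x := fun x => rfl
  have hker : Module.finrank K (LinearMap.ker φ) ≤ 1 := by
    have h1 : Nat.card (LinearMap.ker φ : Set F) ≤ q := by
      have := card_zeros_le (Polynomial.X ^ q - Polynomial.X)
        (FiniteField.X_pow_card_sub_X_ne_zero F hq1) (LinearMap.ker φ : Set F) (fun x hx => by
          have : φ x = 0 := hx
          simpa [hφ] using this)
      rwa [FiniteField.X_pow_card_sub_X_natDegree_eq F hq1] at this
    have h2 : Nat.card (LinearMap.ker φ) = q ^ Module.finrank K (LinearMap.ker φ) := by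
      rw [Module.natCard_eq_pow_finrank (K := K), Nat.card_eq_fintype_card]
    have h3 : q ^ Module.finrank K (LinearMap.ker φ) ≤ q ^ 1 := by
      rw [← h2, pow_one]; exact h1
    exact (Nat.pow_le_pow_iff_right hq1).1 h3
  have hlt : LinearMap.range φ < ⊤ := by
    rw [lt_top_iff_ne_top]
    intro h
    have hinj := LinearMap.injective_iff_surjective.2 (LinearMap.range_eq_top.1 h)
    exact one_ne_zero (hinj (show φ (1 : F) = φ 0 by
      rw [map_zero, hφ, one_pow, sub_self]))
  obtain ⟨f, hf0, hle⟩ := (LinearMap.range φ).exists_le_ker_of_lt_top hlt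
  have hrange : LinearMap.range φ = LinearMap.ker f := by
    refine Submodule.eq_of_le_of_finrank_le hle ?_
    have h1 := Module.Dual.finrank_ker_add_one_of_ne_zero (f := f) hf0
    have h2 := φ.finrank_range_add_finrank_ker
    omega
  let B : F →ₗ[K] F →ₗ[K] K :=
    ((LinearMap.mul K F).compl₂ (FiniteField.frobeniusAlgHom K F).toLinearMap).compr₂
      (f ∘ₗ LinearMap.mulLeft K c)
  have hB : ∀ w, B w w = f (c * (w * w ^ q)) := fun w => rfl
  obtain ⟨w, hw, hBw⟩ := exists_isotropic hn B
  have hmem : c * (w * w ^ q) ∈ LinearMap.range φ := by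
    rw [hrange, LinearMap.mem_ker, ← hB, hBw]
  obtain ⟨t, ht⟩ := hmem
  rw [hφ] at ht
  refine ⟨w⁻¹, t, inv_ne_zero hw, ?_⟩
  have : w⁻¹ * (w⁻¹ * t) ^ q - w⁻¹ ^ q * (w⁻¹ * t) = w⁻¹ * w⁻¹ ^ q * (t ^ q - t) := by
    rw [mul_pow]; ring
  rw [this, ht, inv_pow]
  field_simp

open Polynomial in
theorem card_roots_eq {K F : Type*} [Field K] [Fintype K] [Field F] [Finite F] [Algebra K F]
    (hn : 3 ≤ Module.finrank K F) (c : F) (hc : c ≠ 0) :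
    ∃ a : F, Nat.card {x : F | x ^ Fintype.card K ^ 2 + a * x ^ Fintype.card K
      + c ^ (Fintype.card K - 1) * x = 0} = Fintype.card K ^ 2 := by
  obtain ⟨u, t, hu, h⟩ := exists_moore hn c
  set v := u * t with hv
  set q := Fintype.card K with hq
  have hq1 : 1 < q := Fintype.one_lt_card
  set b := c ^ (q - 1) with hb
  let σ := FiniteField.frobeniusAlgHom K F
  have hσ : ∀ x, σ x = x ^ q := fun x => rfl
  have hbc : b * c = c ^ q := by
    rw [hb, ← pow_succ, Nat.sub_add_cancel hq1.le]
  have hpow : c ^ q = u ^ q * v ^ q ^ 2 - u ^ q ^ 2 * v ^ q := by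
    rw [← hσ, ← h, map_sub, map_mul, map_mul, hσ, hσ, hσ, hσ, ← pow_mul, ← pow_mul, ← pow_two]
  set a := -(u ^ q ^ 2 + b * u) / u ^ q with ha
  have huq : u ^ q ≠ 0 := pow_ne_zero _ hu
  have hau : a * u ^ q = -(u ^ q ^ 2 + b * u) := div_mul_cancel₀ _ huq
  let L : F →ₗ[K] F := σ.toLinearMap ∘ₗ σ.toLinearMap + a • σ.toLinearMap + b • LinearMap.id
  have hL : ∀ x, L x = x ^ q ^ 2 + a * x ^ q + b * x := by
    intro x
    rw [pow_two q, pow_mul]; rfl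
  have hLu : L u = 0 := by rw [hL, hau]; ring
  have hLv : L v = 0 := by
    rw [hL]
    apply mul_left_cancel₀ huq
    linear_combination v ^ q * hau - hpow - hbc - b * h
  refine ⟨a, le_antisymm ?_ ?_⟩
  · let P : F[X] := X ^ q ^ 2 + (C a * X ^ q + C b * X)
    have hlow : (C a * X ^ q + C b * X : F[X]).degree < ((q ^ 2 : ℕ) : WithBot ℕ) := by
      have hqq : q < q ^ 2 := by nlinarith
      refine (degree_add_le _ _).trans_lt (max_lt ?_ ?_)
      · exact (degree_C_mul_X_pow_le _ _).trans_lt (by exact_mod_cast hqq)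
      · exact (degree_C_mul_X_le _).trans_lt (by exact_mod_cast hq1.trans hqq)
    have hm : P.Monic := monic_X_pow_add hlow
    have hd : P.natDegree = q ^ 2 := by
      refine natDegree_eq_of_degree_eq_some ?_
      rw [degree_add_eq_left_of_degree_lt (by rwa [degree_X_pow]), degree_X_pow]
    refine (card_zeros_le P hm.ne_zero _ fun x hx => ?_).trans hd.le
    simpa [P, add_assoc] using hx
  · -- The roots contain the `K`-span of the independent pair `u, v`.
    let g : K × K → {x : F | x ^ q ^ 2 + a * x ^ q + b * x = 0} := fun s =>
      ⟨s.1 • u + s.2 • v, by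
        show _ = _
        rw [← hL, map_add, map_smul, map_smul, hLu, hLv]; simp⟩
    have hg : Function.Injective g := by
      have key : ∀ x y : K, x • u + y • v = 0 → x = 0 ∧ y = 0 := by
        intro x y hxy
        have hxy' : x • u ^ q + y • v ^ q = 0 := by
          have h0 := congrArg σ hxy
          rwa [map_add, map_smul, map_smul, map_zero, hσ, hσ] at h0
        rw [Algebra.smul_def, Algebra.smul_def] at hxy hxy'
        constructor
        · have : algebraMap K F x * c = 0 := by
            linear_combination v ^ q * hxy - v * hxy' - algebraMap K F x * h
          simpa [hc] using this
        · have : algebraMap K F y * c = 0 := by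
            linear_combination u * hxy' - u ^ q * hxy - algebraMap K F y * h
          simpa [hc] using this
      intro s s' hs
      have hs := congrArg Subtype.val hs
      have := key (s.1 - s'.1) (s.2 - s'.2) (by
        have hs : s.1 • u + s.2 • v = s'.1 • u + s'.2 • v := hs
        rw [sub_smul, sub_smul]; linear_combination hs)
      exact Prod.ext (sub_eq_zero.1 this.1) (sub_eq_zero.1 this.2)
    have := Nat.card_le_card_of_injective g hg
    rwa [Nat.card_prod, Nat.card_eq_fintype_card, ← pow_two] at this

/-- Hilbert 90 for finite fields: an element of norm one is a `(q - 1)`-th power. -/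
theorem exists_pow_of_norm_one {F : Type*} [Field F] [Fintype F] (q n : ℕ) (hq : 1 < q)
    (hn : n ≠ 0) (hF : Fintype.card F = q ^ n) (b : F) (hb : b ^ ((q ^ n - 1) / (q - 1)) = 1) :
    ∃ c : F, c ≠ 0 ∧ b = c ^ (q - 1) := by
  have hdvd : (q - 1) ∣ q ^ n - 1 := by simpa using Nat.sub_dvd_pow_sub_pow q 1 n
  obtain ⟨M, hM⟩ := hdvd
  have hq0 : 0 < q - 1 := by omega
  rw [hM, Nat.mul_div_cancel_left _ hq0] at hb
  have hM0 : 0 < M := by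
    have : 1 < q ^ n := Nat.one_lt_pow hn hq
    rcases Nat.eq_zero_or_pos M with h | h
    · rw [h] at hM; omega
    · exact h
  have hb0 : b ≠ 0 := by rintro rfl; simp [hM0.ne'] at hb
  obtain ⟨g, hg⟩ := IsCyclic.exists_generator (α := Fˣ)
  obtain ⟨k, hk⟩ := (mem_powers_iff_mem_zpowers).2 (hg (Units.mk0 b hb0))
  have hord : orderOf g = (q - 1) * M := by
    rw [orderOf_eq_card_of_forall_mem_zpowers hg, Nat.card_units, Nat.card_eq_fintype_card, hF, hM]
  have h1 : g ^ (k * M) = 1 := by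
    rw [pow_mul]
    simp only at hk
    rw [hk]; ext; simpa using hb
  have h2 := orderOf_dvd_of_pow_eq_one h1
  rw [hord] at h2
  obtain ⟨j, rfl⟩ := Nat.dvd_of_mul_dvd_mul_right hM0 h2
  refine ⟨((g ^ j : Fˣ) : F), Units.ne_zero _, ?_⟩
  have := congrArg Units.val hk
  simp only [Units.val_mk0] at this
  rw [← this, mul_comm, pow_mul]; simp


/-- for n ≥ 3 and b ∈ 𝔽_{q^n} with b^{(q^n−1)/(q−1)} = 1, there is a ∈ 𝔽_{q^n}
such that X^{q^2} + aX^q + bX has exactly q² roots in 𝔽_{q^n}; in particular the norm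
condition is necessary for bX + aX^q + X^{q^2} to have at most q roots for every a. -/
theorem stmt_15 (p r q n : ℕ) (hp : p.Prime) (hr : 0 < r) (hq : q = p ^ r)
    (hn : 3 ≤ n)
    (F : Type) [Field F] [Fintype F] (hF : Fintype.card F = q ^ n)
    (b : F) (hb : b ^ ((q ^ n - 1) / (q - 1)) = 1) :
    (∃ a : F, Nat.card {x : F | x ^ q ^ 2 + a * x ^ q + b * x = 0} = q ^ 2) ∧
      ¬ (∀ a : F, Nat.card {x : F | b * x + a * x ^ q + x ^ q ^ 2 = 0} ≤ q) := by
  subst hq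
  have hq1 : 1 < p ^ r := Nat.one_lt_pow hr.ne' hp.one_lt
  obtain ⟨c, hc, rfl⟩ := exists_pow_of_norm_one (p ^ r) n hq1 (by omega) hF b hb
  have := Fact.mk hp
  have hF' : Fintype.card F = p ^ (r * n) := by rw [hF, pow_mul]
  have : CharP F p := charP_of_card_eq_prime_pow hF'
  let _ : Algebra (ZMod p) F := ZMod.algebra F p
  have hfr : Module.finrank (ZMod p) F = r * n := by
    have h := Module.card_eq_pow_finrank (K := ZMod p) (V := F)
    rw [hF', ZMod.card] at h
    exact (Nat.pow_right_injective hp.two_le h).symm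
  obtain ⟨ι⟩ := FiniteField.nonempty_algHom_of_finrank_dvd (F := ZMod p) (K := GaloisField p r)
    (L := F) (by rw [GaloisField.finrank p hr.ne', hfr]; exact dvd_mul_right _ _)
  let _ : Algebra (GaloisField p r) F := ι.toRingHom.toAlgebra
  let _ : Fintype (GaloisField p r) := Fintype.ofFinite _
  have hK : Fintype.card (GaloisField p r) = p ^ r := by
    rw [Fintype.card_eq_nat_card, GaloisField.card p r hr.ne']
  have hn' : Module.finrank (GaloisField p r) F = n := by
    have h := Module.card_eq_pow_finrank (K := GaloisField p r) (V := F)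
    rw [hF, hK] at h
    exact (Nat.pow_right_injective hq1 h).symm
  obtain ⟨a, ha⟩ := card_roots_eq (K := GaloisField p r) (F := F) (by omega) c hc
  rw [hK] at ha
  refine ⟨⟨a, ha⟩, fun hall => ?_⟩
  have hle := hall a
  have heq : {x : F | c ^ (p ^ r - 1) * x + a * x ^ p ^ r + x ^ (p ^ r) ^ 2 = 0} =
      {x : F | x ^ (p ^ r) ^ 2 + a * x ^ p ^ r + c ^ (p ^ r - 1) * x = 0} := by
    ext x
    rw [Set.mem_ofPred_eq, Set.mem_ofPred_eq, add_comm, ← add_assoc, add_right_comm]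
  rw [heq, ha] at hle
  nlinarith
end

section
/- Let q be a prime power and let u, v ∈ 𝔽_{q^n} be linearly independent over 𝔽_q. Set α = u·v^q − v·u^q and β = u^{q^2}·v − v^{q^2}·u, and let g(X) = α·X^{q^2} + β·X^q + α^q·X. Then α ≠ 0 and the set of roots of g in an algebraic closure of 𝔽_{q^n} is exactly the 𝔽_q-span of {u, v}; in particular, g has exactly q² distinct roots, all lying in 𝔽_{q^n}. -/
/-!
Write `x ↦ x ^ q` for the Frobenius map over `𝔽_q`. If the Moore determinant `α = u v^q - v u^q`
vanished with `v ≠ 0`, then `u / v` would be fixed by Frobenius, contradicting independence; so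
`α ≠ 0`.

Given any `x` in the algebraic closure, `α ≠ 0` lets one solve `x = s u + t v`,
`x^q = s u^q + t v^q` for `s, t` by Cramer's rule. The equation `g(x) = 0` says that the `3 × 3`
Moore determinant of `x, u, v` vanishes, i.e. that also `x^(q^2) = s u^(q^2) + t v^(q^2)`.
Comparing the last two equations with the Frobenius images of the first two gives a homogeneous
linear system for `s^q - s` and `t^q - t` with determinant `α^q ≠ 0`, so `s` and `t` are fixed by
Frobenius; such elements lie in `F` because `X^(q^n) - X` already splits there.
Conversely elements of the span are roots since `g` is `𝔽_q`-linear and kills `u` and `v`.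

For the count, `(s, t) ↦ s u + t v` is a bijection from pairs of Frobenius-fixed elements of `F`
onto the root set, and there are exactly `q` fixed elements, since `X^q - X` is separable.
-/

open Polynomial in
/-- An extension field of a finite field `F` has no solutions of `x ^ |F| = x` outside `F`. -/
lemma exists_algebraMap_eq_of_pow_card_eq {F K : Type*} [Field F] [Fintype F] [Field K]
    [Algebra F K] {x : K} (hx : x ^ Fintype.card F = x) : ∃ a : F, algebraMap F K a = x := by
  have hsp : Splits (X ^ Fintype.card F - X : F[X]) := by
    rw [splits_iff_card_roots, FiniteField.roots_X_pow_card_sub_X, ← Finset.card_def,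
      Finset.card_univ, FiniteField.X_pow_card_sub_X_natDegree_eq _ Fintype.one_lt_card]
  have h := hsp.roots_map (algebraMap F K)
  rw [FiniteField.roots_X_pow_card_sub_X] at h
  have hmem : x ∈ ((X ^ Fintype.card F - X : F[X]).map (algebraMap F K)).roots := by
    rw [Polynomial.map_sub, Polynomial.map_pow, Polynomial.map_X,
      mem_roots (FiniteField.X_pow_card_sub_X_ne_zero K Fintype.one_lt_card)]
    simp [hx]
  rw [h, Multiset.mem_map] at hmem
  obtain ⟨a, -, ha⟩ := hmem
  exact ⟨a, ha⟩

lemma exists_algebraMap_eq_of_pow_eq {F K : Type*} [Field F] [Fintype F] [Field K]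
    [Algebra F K] {q n : ℕ} (hF : Fintype.card F = q ^ n) {x : K} (hx : x ^ q = x) :
    ∃ a : F, a ^ q = a ∧ algebraMap F K a = x := by
  have hxn : x ^ q ^ n = x := by
    clear hF
    induction n with
    | zero => simp
    | succ k ih => rw [pow_succ, pow_mul, ih, hx]
  obtain ⟨a, ha⟩ := exists_algebraMap_eq_of_pow_card_eq (F := F) (hF ▸ hxn)
  refine ⟨a, (algebraMap F K).injective ?_, ha⟩
  rw [map_pow, ha, hx]

open Polynomial in
/-- A field with `q ^ n` elements contains a copy of `𝔽_q`, namely the fixed points of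
`s ↦ s ^ q`. -/
lemma card_pow_eq_self {F : Type*} [Field F] [Fintype F] {p q n : ℕ} [CharP F p] (hpq : p ∣ q)
    (hq : 1 < q) (hF : Fintype.card F = q ^ n) : Nat.card {s : F | s ^ q = s} = q := by
  let K := AlgebraicClosure F
  have h1 := card_rootSet_eq_natDegree (K := K) (galois_poly_separable (K := F) p q hpq)
    (IsAlgClosed.splits _)
  rw [FiniteField.X_pow_card_sub_X_natDegree_eq _ hq, ← Nat.card_eq_fintype_card] at h1
  have h2 : (X ^ q - X : F[X]).rootSet K = algebraMap F K '' {s : F | s ^ q = s} := by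
    ext x
    rw [mem_rootSet_of_ne (FiniteField.X_pow_card_sub_X_ne_zero F hq)]
    simp only [map_sub, map_pow, aeval_X, sub_eq_zero, Set.mem_image, Set.mem_setOf_eq]
    constructor
    · exact exists_algebraMap_eq_of_pow_eq hF
    · rintro ⟨a, ha, rfl⟩
      rw [← map_pow, ha]
  rw [h2, Nat.card_image_of_injective (algebraMap F K).injective] at h1
  exact h1

/-- A root of the Moore determinant of `x, u, v`, as a polynomial in `x`, is a combination of
`u` and `v` with Frobenius-fixed coefficients. -/
lemma exists_fixed_of_moore_eq_zero {K : Type*} [Field K] {p r q : ℕ} [Fact p.Prime] [CharP K p]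
    (hq : q = p ^ r) {u v x : K} (hα : u * v ^ q - v * u ^ q ≠ 0)
    (hx : (u * v ^ q - v * u ^ q) * x ^ q ^ 2 + (u ^ q ^ 2 * v - v ^ q ^ 2 * u) * x ^ q +
      (u * v ^ q - v * u ^ q) ^ q * x = 0) :
    ∃ s t : K, s ^ q = s ∧ t ^ q = t ∧ x = s * u + t * v := by
  have hadd (a b : K) : (a + b) ^ q = a ^ q + b ^ q := by rw [hq]; exact add_pow_char_pow ..
  have hsub (a b : K) : (a - b) ^ q = a ^ q - b ^ q := by rw [hq]; exact sub_pow_char_pow ..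
  have hsq (a : K) : (a ^ q) ^ q = a ^ q ^ 2 := by rw [← pow_mul, sq]
  have hαq := pow_ne_zero q hα
  rw [hsub, mul_pow, mul_pow, hsq, hsq] at hx hαq
  obtain ⟨s, hs⟩ : ∃ s, s * (u * v ^ q - v * u ^ q) = x * v ^ q - v * x ^ q :=
    ⟨_, div_mul_cancel₀ _ hα⟩
  obtain ⟨t, ht⟩ : ∃ t, t * (u * v ^ q - v * u ^ q) = u * x ^ q - x * u ^ q :=
    ⟨_, div_mul_cancel₀ _ hα⟩
  have e0 : x = s * u + t * v := mul_left_cancel₀ hα (by linear_combination -u * hs - v * ht)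
  have e1 : x ^ q = s * u ^ q + t * v ^ q :=
    mul_left_cancel₀ hα (by linear_combination -u ^ q * hs - v ^ q * ht)
  have e2 : x ^ q ^ 2 = s * u ^ q ^ 2 + t * v ^ q ^ 2 :=
    mul_left_cancel₀ hα (by linear_combination hx - u ^ q ^ 2 * hs - v ^ q ^ 2 * ht)
  have f1 : x ^ q = s ^ q * u ^ q + t ^ q * v ^ q := by
    rw [← mul_pow, ← mul_pow, ← hadd, ← e0]
  have f2 : x ^ q ^ 2 = s ^ q * u ^ q ^ 2 + t ^ q * v ^ q ^ 2 := by
    rw [← hsq x, ← hsq u, ← hsq v, ← mul_pow, ← mul_pow, ← hadd, ← e1]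
  refine ⟨s, t, mul_left_cancel₀ hαq ?_, mul_left_cancel₀ hαq ?_, e0⟩
  · linear_combination v ^ q ^ 2 * (e1 - f1) - v ^ q * (e2 - f2)
  · linear_combination u ^ q * (e2 - f2) - u ^ q ^ 2 * (e1 - f1)

/-- The Moore determinant of `x, u, v` vanishes when `x` is a combination of `u` and `v` with
Frobenius-fixed coefficients. -/
lemma moore_eq_zero_of_fixed {K : Type*} [Field K] {p r q : ℕ} [Fact p.Prime] [CharP K p]
    (hq : q = p ^ r) {u v s t : K} (hs : s ^ q = s) (ht : t ^ q = t) :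
    (u * v ^ q - v * u ^ q) * (s * u + t * v) ^ q ^ 2 +
      (u ^ q ^ 2 * v - v ^ q ^ 2 * u) * (s * u + t * v) ^ q +
      (u * v ^ q - v * u ^ q) ^ q * (s * u + t * v) = 0 := by
  have hadd (a b : K) : (a + b) ^ q = a ^ q + b ^ q := by rw [hq]; exact add_pow_char_pow ..
  have hsub (a b : K) : (a - b) ^ q = a ^ q - b ^ q := by rw [hq]; exact sub_pow_char_pow ..
  have hsq (a : K) : (a ^ q) ^ q = a ^ q ^ 2 := by rw [← pow_mul, sq]
  rw [← hsq (s * u + t * v), hadd, hsub]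
  simp only [mul_pow, hs, ht, hadd, hsq]
  ring


/-- for u, v ∈ 𝔽_{q^n} linearly independent over 𝔽_q, with
α = u·v^q − v·u^q and β = u^{q^2}·v − v^{q^2}·u, the polynomial
g(X) = α·X^{q^2} + β·X^q + α^q·X satisfies α ≠ 0, its root set in an algebraic closure is
exactly the 𝔽_q-span of {u, v} (inside 𝔽_{q^n}), and it has exactly q² distinct roots.
Membership of s in 𝔽_q is expressed as s^q = s. -/
theorem stmt_16 (p r q n : ℕ) (hp : p.Prime) (hr : 0 < r) (hq : q = p ^ r)
    (hn : 0 < n)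
    (F : Type) [Field F] [Fintype F] (hF : Fintype.card F = q ^ n)
    (u v : F)
    (hind : ∀ s t : F, s ^ q = s → t ^ q = t → s * u + t * v = 0 → s = 0 ∧ t = 0)
    (α β : F) (hα : α = u * v ^ q - v * u ^ q) (hβ : β = u ^ q ^ 2 * v - v ^ q ^ 2 * u) :
    α ≠ 0 ∧
    {x : AlgebraicClosure F |
        algebraMap F (AlgebraicClosure F) α * x ^ q ^ 2 +
          algebraMap F (AlgebraicClosure F) β * x ^ q +
          algebraMap F (AlgebraicClosure F) (α ^ q) * x = 0} =
      algebraMap F (AlgebraicClosure F) ''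
        {z : F | ∃ s t : F, s ^ q = s ∧ t ^ q = t ∧ z = s * u + t * v} ∧
    Nat.card {x : AlgebraicClosure F |
        algebraMap F (AlgebraicClosure F) α * x ^ q ^ 2 +
          algebraMap F (AlgebraicClosure F) β * x ^ q +
          algebraMap F (AlgebraicClosure F) (α ^ q) * x = 0} = q ^ 2 := by
  have hp' : Fact p.Prime := ⟨hp⟩
  have hchar : CharP F p := charP_of_card_eq_prime_pow (f := r * n) (by rw [hF, hq, pow_mul])
  have hcharK : CharP (AlgebraicClosure F) p :=
    charP_of_injective_algebraMap (algebraMap F (AlgebraicClosure F)).injective p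
  have hq1 : 1 < q := hq ▸ Nat.one_lt_pow hr.ne' hp.one_lt
  have hα0 : α ≠ 0 := by
    intro h0
    have hv : v ≠ 0 := by
      rintro rfl
      exact one_ne_zero (hind 0 1 (zero_pow (by omega)) (one_pow q) (by simp)).2
    have hfix : (u / v) ^ q = u / v := by
      rw [div_pow, div_eq_div_iff (pow_ne_zero q hv) hv]
      linear_combination hα - h0
    have hneg : (-1 : F) ^ q = -1 := by
      have h : (0 - 1 : F) ^ q = 0 ^ q - 1 ^ q := by rw [hq]; exact sub_pow_char_pow ..
      simpa [zero_pow (show q ≠ 0 by omega)] using h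
    exact neg_ne_zero.mpr one_ne_zero
      (hind (-1) (u / v) hneg hfix (by rw [div_mul_cancel₀ _ hv]; ring)).1
  have hroots : {x : AlgebraicClosure F |
        algebraMap F (AlgebraicClosure F) α * x ^ q ^ 2 +
          algebraMap F (AlgebraicClosure F) β * x ^ q +
          algebraMap F (AlgebraicClosure F) (α ^ q) * x = 0} =
      algebraMap F (AlgebraicClosure F) ''
        {z : F | ∃ s t : F, s ^ q = s ∧ t ^ q = t ∧ z = s * u + t * v} := by
    have hα' := (map_ne_zero (algebraMap F (AlgebraicClosure F))).mpr hα0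
    subst hα hβ
    simp only [map_sub, map_mul, map_pow] at hα' ⊢
    ext x
    constructor
    · intro hx
      obtain ⟨s, t, hs, ht, rfl⟩ := exists_fixed_of_moore_eq_zero hq hα' hx
      obtain ⟨s, hs', rfl⟩ := exists_algebraMap_eq_of_pow_eq hF hs
      obtain ⟨t, ht', rfl⟩ := exists_algebraMap_eq_of_pow_eq hF ht
      exact ⟨s * u + t * v, ⟨s, t, hs', ht', rfl⟩, by simp⟩
    · rintro ⟨_, ⟨s, t, hs, ht, rfl⟩, rfl⟩
      simp only [map_add, map_mul, Set.mem_setOf_eq]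
      exact moore_eq_zero_of_fixed hq (by rw [← map_pow, hs]) (by rw [← map_pow, ht])
  refine ⟨hα0, hroots, ?_⟩
  have himage : {z : F | ∃ s t : F, s ^ q = s ∧ t ^ q = t ∧ z = s * u + t * v} =
      (fun w : F × F => w.1 * u + w.2 * v) '' ({s : F | s ^ q = s} ×ˢ {t : F | t ^ q = t}) := by
    ext z
    constructor
    · rintro ⟨s, t, hs, ht, rfl⟩
      exact ⟨(s, t), ⟨hs, ht⟩, rfl⟩
    · rintro ⟨⟨s, t⟩, ⟨hs, ht⟩, rfl⟩
      exact ⟨s, t, hs, ht, rfl⟩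
  have hsub (a b : F) : (a - b) ^ q = a ^ q - b ^ q := by rw [hq]; exact sub_pow_char_pow ..
  have hinj : Set.InjOn (fun w : F × F => w.1 * u + w.2 * v)
      ({s : F | s ^ q = s} ×ˢ {t : F | t ^ q = t}) := by
    rintro ⟨s, t⟩ ⟨hs, ht⟩ ⟨s', t'⟩ ⟨hs', ht'⟩ h
    simp only [Set.mem_setOf_eq] at hs ht hs' ht' h
    have h0 := hind (s - s') (t - t') (by rw [hsub, hs, hs']) (by rw [hsub, ht, ht'])
      (by linear_combination h)
    rw [sub_eq_zero.mp h0.1, sub_eq_zero.mp h0.2]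
  rw [hroots, Nat.card_image_of_injective (algebraMap F _).injective, himage,
    Nat.card_image_of_injOn hinj, Nat.card_congr (Equiv.Set.prod _ _), Nat.card_prod,
    card_pow_eq_self (hq ▸ dvd_pow_self p hr.ne') hq1 hF, sq]
end
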